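/- arXiv:2404.03063 — 9 statements merged into one kernel-verified Lean document; each statement's English description precedes it below -/
import Mathlib

section
/- Let γ = (γ₀,…,γ₅) ∈ ℂ⁶ and δ = (δ₀,…,δ₅) ∈ ℂ⁶. Suppose there exist h₁, h₂, h₃ ∈ ℂ and λ ∈ ℂ with λ ≠ 0 such that q_γ(x₀,x₁,x₂) = λ · q_δ(−h₁x₀ − h₂x₁ − h₃x₂, x₀, x₁) for all (x₀,x₁,x₂) ∈ ℂ³. Then the 2×3 matrix [[γ₄² − 4γ₃γ₅, γ₂γ₄ − 2γ₁γ₅, γ₂² − 4γ₀γ₅], [δ₂² − 4δ₀δ₅, δ₁δ₂ − 2δ₀δ₄, δ₁² − 4δ₀δ₃]] has rank at most 1, i.e. all of its 2×2 minors vanish. (This is the forward direction of the description of the conic multiview variety for the camera pair ([0 I], [I 0]): every pair of image conics of a common plane conic in space satisfies these equations.) -/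
/-!
The three entries of the first row are, up to a factor 2 on the mixed one, the coefficients of the
discriminant of `q_γ` with respect to `x₂`, a binary quadratic form in `(x₀, x₁)` cutting out the
two tangent lines to the conic through the point `(0 : 0 : 1)`. Those of the second row
are the coefficients of the discriminant of `q_δ(y, x₀, x₁)` with respect to `y`. The substitution
`y = -h₁x₀ - h₂x₁ - h₃x₂` is affine in `x₂` with leading coefficient `-h₃`, so the discriminant
gets multiplied by `h₃²`, and scaling the form by `λ` multiplies it by `λ²`. Hence the first row is
`(λh₃)²` times the second, and every 2×2 minor vanishes.
-/

/-- The quadratic form `q_γ(x₀,x₁,x₂) = γ₀x₀² + γ₁x₀x₁ + γ₂x₀x₂ + γ₃x₁² + γ₄x₁x₂ + γ₅x₂²`. -/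
noncomputable def qForm (γ : Fin 6 → ℂ) (x₀ x₁ x₂ : ℂ) : ℂ :=
  γ 0 * x₀ ^ 2 + γ 1 * x₀ * x₁ + γ 2 * x₀ * x₂ + γ 3 * x₁ ^ 2 + γ 4 * x₁ * x₂ + γ 5 * x₂ ^ 2

/-- The coefficients of a ternary quadratic form are determined by its values. -/
lemma qForm_injective {γ ε : Fin 6 → ℂ}
    (h : ∀ x₀ x₁ x₂ : ℂ, qForm γ x₀ x₁ x₂ = qForm ε x₀ x₁ x₂) : γ = ε := by
  simp only [qForm] at h
  have e0 := h 1 0 0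
  have e3 := h 0 1 0
  have e5 := h 0 0 1
  have e1 := h 1 1 0
  have e2 := h 1 0 1
  have e4 := h 0 1 1
  funext i
  fin_cases i <;> simp only [Fin.zero_eta, Fin.mk_one, Fin.reduceFinMk]
  · linear_combination e0
  · linear_combination e1 - e0 - e3
  · linear_combination e2 - e0 - e5
  · linear_combination e3
  · linear_combination e4 - e3 - e5
  · linear_combination e5

/-- Forward direction of the description of the conic multiview variety for the
camera pair `([0 I], [I 0])`: if `q_γ(x) = λ · q_δ(H₂₁(h)x)` for some plane `h` and
`λ ≠ 0`, then all 2×2 minors of the matrix of Theorem A vanish. -/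
theorem stmt0 (γ δ : Fin 6 → ℂ)
    (h : ∃ h₁ h₂ h₃ lam : ℂ, lam ≠ 0 ∧ ∀ x₀ x₁ x₂ : ℂ,
      qForm γ x₀ x₁ x₂ = lam * qForm δ (-h₁ * x₀ - h₂ * x₁ - h₃ * x₂) x₀ x₁) :
    (γ 4 ^ 2 - 4 * γ 3 * γ 5) * (δ 1 * δ 2 - 2 * δ 0 * δ 4)
      - (γ 2 * γ 4 - 2 * γ 1 * γ 5) * (δ 2 ^ 2 - 4 * δ 0 * δ 5) = 0 ∧
    (γ 4 ^ 2 - 4 * γ 3 * γ 5) * (δ 1 ^ 2 - 4 * δ 0 * δ 3)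
      - (γ 2 ^ 2 - 4 * γ 0 * γ 5) * (δ 2 ^ 2 - 4 * δ 0 * δ 5) = 0 ∧
    (γ 2 * γ 4 - 2 * γ 1 * γ 5) * (δ 1 ^ 2 - 4 * δ 0 * δ 3)
      - (γ 2 ^ 2 - 4 * γ 0 * γ 5) * (δ 1 * δ 2 - 2 * δ 0 * δ 4) = 0 := by
  obtain ⟨h₁, h₂, h₃, lam, -, h⟩ := h
  -- The coefficient vector of `λ · q_δ(-h₁x₀ - h₂x₁ - h₃x₂, x₀, x₁)`.
  have hγ : γ = ![lam * (δ 0 * h₁ ^ 2 - δ 1 * h₁ + δ 3),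
      lam * (2 * δ 0 * h₁ * h₂ - δ 1 * h₂ - δ 2 * h₁ + δ 4),
      lam * (2 * δ 0 * h₁ * h₃ - δ 1 * h₃),
      lam * (δ 0 * h₂ ^ 2 - δ 2 * h₂ + δ 5),
      lam * (2 * δ 0 * h₂ * h₃ - δ 2 * h₃),
      lam * (δ 0 * h₃ ^ 2)] := by
    refine qForm_injective fun x₀ x₁ x₂ => ?_
    rw [h]
    simp only [qForm, Matrix.cons_val]
    ring
  have r0 : γ 4 ^ 2 - 4 * γ 3 * γ 5 = (lam * h₃) ^ 2 * (δ 2 ^ 2 - 4 * δ 0 * δ 5) := by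
    simp only [hγ, Matrix.cons_val]
    ring
  have r1 : γ 2 * γ 4 - 2 * γ 1 * γ 5 = (lam * h₃) ^ 2 * (δ 1 * δ 2 - 2 * δ 0 * δ 4) := by
    simp only [hγ, Matrix.cons_val]
    ring
  have r2 : γ 2 ^ 2 - 4 * γ 0 * γ 5 = (lam * h₃) ^ 2 * (δ 1 ^ 2 - 4 * δ 0 * δ 3) := by
    simp only [hγ, Matrix.cons_val]
    ring
  rw [r0, r1, r2]
  refine ⟨?_, ?_, ?_⟩ <;> ring
end

section
/- Let γ = (γ₀,…,γ₅) ∈ ℂ⁶ with q_γ not the zero quadratic form. Then the three equations γ₄² = 4γ₃γ₅, γ₂γ₄ = 2γ₁γ₅ and γ₂² = 4γ₀γ₅ hold simultaneously if and only if either q_γ = ℓ² for some linear form ℓ(x₀,x₁,x₂) (γ is a double line), or q_γ = ℓ₁·ℓ₂ for two linear forms ℓ₁, ℓ₂ both vanishing at the point (0,0,1) (γ is a union of two lines meeting at the epipole (0:0:1)). -/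
/-- A linear form in `x₀,x₁,x₂` with coefficients `u,v,w`. -/
noncomputable def linForm (u v w : ℂ) (x₀ x₁ x₂ : ℂ) : ℂ := u * x₀ + v * x₁ + w * x₂

/-- Equality of polynomial functions, evaluated at the basis vectors and their pairwise sums,
determines the coefficients. -/
lemma coeff_of_eq_mul {γ : Fin 6 → ℂ} {u₁ v₁ w₁ u₂ v₂ w₂ : ℂ}
    (h : ∀ x₀ x₁ x₂ : ℂ,
      qForm γ x₀ x₁ x₂ = linForm u₁ v₁ w₁ x₀ x₁ x₂ * linForm u₂ v₂ w₂ x₀ x₁ x₂) :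
    γ 0 = u₁ * u₂ ∧ γ 1 = u₁ * v₂ + v₁ * u₂ ∧ γ 2 = u₁ * w₂ + w₁ * u₂ ∧
      γ 3 = v₁ * v₂ ∧ γ 4 = v₁ * w₂ + w₁ * v₂ ∧ γ 5 = w₁ * w₂ := by
  simp only [qForm, linForm] at h
  have h₀ := h 1 0 0
  have h₁ := h 0 1 0
  have h₂ := h 0 0 1
  have h₀₁ := h 1 1 0
  have h₀₂ := h 1 0 1
  have h₁₂ := h 0 1 1
  refine ⟨?_, ?_, ?_, ?_, ?_, ?_⟩
  · linear_combination h₀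
  · linear_combination h₀₁ - h₀ - h₁
  · linear_combination h₀₂ - h₀ - h₂
  · linear_combination h₁
  · linear_combination h₁₂ - h₁ - h₂
  · linear_combination h₂

lemma exists_binary_factor (a b c : ℂ) :
    ∃ u₁ v₁ u₂ v₂ : ℂ, a = u₁ * u₂ ∧ b = u₁ * v₂ + v₁ * u₂ ∧ c = v₁ * v₂ := by
  by_cases ha : a = 0
  · exact ⟨0, 1, b, c, by simp [ha], by simp, by simp⟩
  · obtain ⟨d, hd⟩ := IsAlgClosed.exists_pow_nat_eq (b ^ 2 - 4 * a * c) two_pos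
    -- `d` is a square root of the discriminant; the factors come from the quadratic formula.
    refine ⟨a, (b + d) / 2, 1, (b - d) / (2 * a), by ring, ?_, ?_⟩
    · field_simp
      ring
    · field_simp
      linear_combination hd

/-- `γ₄² = 4γ₃γ₅`, `γ₂γ₄ = 2γ₁γ₅` and `γ₂² = 4γ₀γ₅` hold simultaneously if and only if
`q_γ` is a double line, or a union of two lines both passing through the epipole `(0:0:1)`. -/
theorem stmt1 (γ : Fin 6 → ℂ) (hne : ¬ ∀ x₀ x₁ x₂ : ℂ, qForm γ x₀ x₁ x₂ = 0) :
    (γ 4 ^ 2 = 4 * γ 3 * γ 5 ∧ γ 2 * γ 4 = 2 * γ 1 * γ 5 ∧ γ 2 ^ 2 = 4 * γ 0 * γ 5) ↔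
    ((∃ u v w : ℂ, ∀ x₀ x₁ x₂ : ℂ, qForm γ x₀ x₁ x₂ = (linForm u v w x₀ x₁ x₂) ^ 2) ∨
     (∃ u₁ v₁ w₁ u₂ v₂ w₂ : ℂ,
        linForm u₁ v₁ w₁ 0 0 1 = 0 ∧ linForm u₂ v₂ w₂ 0 0 1 = 0 ∧
        ∀ x₀ x₁ x₂ : ℂ,
          qForm γ x₀ x₁ x₂ = (linForm u₁ v₁ w₁ x₀ x₁ x₂) * (linForm u₂ v₂ w₂ x₀ x₁ x₂))) := by
  constructor
  · rintro ⟨h₁, h₂, h₃⟩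
    by_cases h₅ : γ 5 = 0
    · right
      have h₄ : γ 4 = 0 := by simpa [h₅] using h₁
      have h₂' : γ 2 = 0 := by simpa [h₅] using h₃
      obtain ⟨u₁, v₁, u₂, v₂, ha, hb, hc⟩ := exists_binary_factor (γ 0) (γ 1) (γ 3)
      refine ⟨u₁, v₁, 0, u₂, v₂, 0, by simp [linForm], by simp [linForm], fun x₀ x₁ x₂ => ?_⟩
      simp only [qForm, linForm, ha, hb, hc, h₂', h₄, h₅]
      ring
    · left
      obtain ⟨w, hw⟩ := IsAlgClosed.exists_pow_nat_eq (γ 5) two_pos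
      have hw₀ : w ≠ 0 := by
        rintro rfl
        exact h₅ (by simpa using hw.symm)
      rw [← hw] at h₁ h₂ h₃
      refine ⟨γ 2 / (2 * w), γ 4 / (2 * w), w, fun x₀ x₁ x₂ => ?_⟩
      simp only [qForm, linForm, ← hw]
      field_simp
      linear_combination -x₀ ^ 2 * h₃ - 2 * x₀ * x₁ * h₂ - x₁ ^ 2 * h₁
  · rintro (⟨u, v, w, h⟩ | ⟨u₁, v₁, w₁, u₂, v₂, w₂, hw₁, hw₂, h⟩)
    · obtain ⟨h₀, h₁, h₂, h₃, h₄, h₅⟩ :=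
        coeff_of_eq_mul fun x₀ x₁ x₂ => (h x₀ x₁ x₂).trans (sq _)
      rw [h₀, h₁, h₂, h₃, h₄, h₅]
      refine ⟨?_, ?_, ?_⟩ <;> ring
    · obtain ⟨-, -, h₂, -, h₄, h₅⟩ := coeff_of_eq_mul h
      obtain rfl : w₁ = 0 := by simpa [linForm] using hw₁
      obtain rfl : w₂ = 0 := by simpa [linForm] using hw₂
      simp [h₂, h₄, h₅]
end

section
/- Let M, M' ∈ GL₄(ℂ). The two twisted cubics they define coincide as subsets of ℙ³, i.e. {z ∈ ℂ⁴ ∖ {0} : ∃ (s,t) ≠ (0,0), ∃ μ ∈ ℂ ∖ {0}, z = μ·Mφ(s,t)} = {z ∈ ℂ⁴ ∖ {0} : ∃ (s,t) ≠ (0,0), ∃ μ ∈ ℂ ∖ {0}, z = μ·M'φ(s,t)}, if and only if there exist A ∈ GL₂(ℂ) and μ ∈ ℂ ∖ {0} such that M' = μ·M·ρ(A). -/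
/-!
The easy direction is the equivariance `ρ(A) φ(v) = φ(A v)` (`rhoMat_mulVec`).

For the converse put `N = M⁻¹ M'`. Equality of the two curves says that `N` maps the cone over the
standard twisted cubic onto itself (`exists_of_curve_subset`). Choose `v₀`, `v₁` with `N φ(v₀)`
proportional to `e₀ = φ(1,0)` and `N φ(v₁)` proportional to `e₃ = φ(0,1)`; they are linearly
independent because `e₀` and `e₃` are. With `B` the matrix whose columns are `v₀`, `v₁`, the matrix
`K = N ρ(B)` still preserves the cone and has `e₀`, `e₃` as eigenvectors. Comparing coefficients in
the equations `y₀y₂ = y₁²` and `y₁y₃ = y₂²` of the cubic along `y = K φ(1,t)` forces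
`K = α ρ(diag(1,d))` (`eq_smul_rhoMat_diag`). As `ρ` is multiplicative (`rhoMat_mul`), this gives
`N = α ρ(diag(1,d) B⁻¹)`.
-/

/-- The parametrization `φ(s,t) = (s³, s²t, st², t³)` of the standard twisted cubic. -/
noncomputable def tcPhi (s t : ℂ) : Fin 4 → ℂ := ![s ^ 3, s ^ 2 * t, s * t ^ 2, t ^ 3]

/-- The matrix `ρ(A)` for `A = [[a,b],[c,d]]`. -/
noncomputable def rhoMat (a b c d : ℂ) : Matrix (Fin 4) (Fin 4) ℂ :=
  !![a ^ 3, 3 * a ^ 2 * b, 3 * a * b ^ 2, b ^ 3;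
     a ^ 2 * c, 2 * a * b * c + a ^ 2 * d, 2 * a * b * d + b ^ 2 * c, b ^ 2 * d;
     a * c ^ 2, 2 * a * c * d + b * c ^ 2, 2 * b * c * d + a * d ^ 2, b * d ^ 2;
     c ^ 3, 3 * c ^ 2 * d, 3 * c * d ^ 2, d ^ 3]

open Matrix in
/-- Equivariance of the parametrization: `ρ(A) φ(v) = φ(A v)`. -/
lemma rhoMat_mulVec (a b c d s t : ℂ) :
    rhoMat a b c d *ᵥ tcPhi s t = tcPhi (a * s + b * t) (c * s + d * t) := by
  ext i
  fin_cases i <;> simp [rhoMat, tcPhi, Matrix.mulVec, dotProduct, Fin.sum_univ_four] <;> ring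

lemma rhoMat_mul (a b c d a' b' c' d' : ℂ) :
    rhoMat a b c d * rhoMat a' b' c' d' =
      rhoMat (a * a' + b * c') (a * b' + b * d') (c * a' + d * c') (c * b' + d * d') := by
  ext i j
  fin_cases i <;> fin_cases j <;>
    simp [rhoMat, Matrix.mul_apply, Fin.sum_univ_four] <;> ring

lemma rhoMat_one : rhoMat 1 0 0 1 = 1 := by
  ext i j
  fin_cases i <;> fin_cases j <;> simp [rhoMat]

lemma rhoMat_mul_inv {a b c d : ℂ} (h : a * d - b * c ≠ 0) :
    rhoMat a b c d * rhoMat (d / (a * d - b * c)) (-b / (a * d - b * c))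
      (-c / (a * d - b * c)) (a / (a * d - b * c)) = 1 := by
  rw [rhoMat_mul, ← rhoMat_one]
  generalize hD : a * d - b * c = D at h ⊢
  congr 1 <;> field_simp <;> first | linear_combination hD | ring

lemma tcPhi_ne_zero {s t : ℂ} (h : (s, t) ≠ (0, 0)) : tcPhi s t ≠ 0 := by
  intro h0
  apply h
  have h1 := congrFun h0 0
  have h2 := congrFun h0 3
  simp [tcPhi] at h1 h2
  simp [h1, h2]

lemma cubic_coeff_eq_zero {p q r w : ℂ}
    (h : ∀ t : ℂ, t ≠ 0 → p + q * t + r * t ^ 2 + w * t ^ 3 = 0) :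
    p = 0 ∧ q = 0 ∧ r = 0 ∧ w = 0 := by
  have h1 := h 1 (by norm_num)
  have h2 := h (-1) (by norm_num)
  have h3 := h 2 (by norm_num)
  have h4 := h (-2) (by norm_num)
  refine ⟨?_, ?_, ?_, ?_⟩
  · linear_combination (2 / 3) * h1 + (2 / 3) * h2 - (1 / 6) * h3 - (1 / 6) * h4
  · linear_combination (2 / 3) * h1 - (2 / 3) * h2 - (1 / 12) * h3 + (1 / 12) * h4
  · linear_combination -(1 / 6) * h1 - (1 / 6) * h2 + (1 / 6) * h3 + (1 / 6) * h4
  · linear_combination -(1 / 6) * h1 + (1 / 6) * h2 + (1 / 12) * h3 - (1 / 12) * h4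

open Matrix in
/-- An invertible matrix with eigenvectors `e₀`, `e₃` that maps the standard twisted cubic into the
quadrics `y₀y₂ = y₁²` and `y₁y₃ = y₂²` is a multiple of some `ρ(diag(1,d))`. -/
lemma eq_smul_rhoMat_diag {α b₀ c₀ b₁ c₁ b₂ c₂ b₃ c₃ δ : ℂ} (K : Matrix (Fin 4) (Fin 4) ℂ)
    (hK : K = !![α, b₀, c₀, 0; 0, b₁, c₁, 0; 0, b₂, c₂, 0; 0, b₃, c₃, δ])
    (hdet : K.det ≠ 0)
    (hq : ∀ s t : ℂ, (K *ᵥ tcPhi s t) 0 * (K *ᵥ tcPhi s t) 2 = (K *ᵥ tcPhi s t) 1 ^ 2 ∧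
      (K *ᵥ tcPhi s t) 1 * (K *ᵥ tcPhi s t) 3 = (K *ᵥ tcPhi s t) 2 ^ 2) :
    ∃ α d : ℂ, α ≠ 0 ∧ d ≠ 0 ∧ K = α • rhoMat 1 0 0 d := by
  have hd : K.det = α * δ * (b₁ * c₂ - c₁ * b₂) := by
    rw [hK]
    simp [Matrix.det_succ_row_zero, Fin.sum_univ_succ, Fin.succAbove]
    ring
  rw [hd] at hdet
  have key : ∀ t : ℂ, t ≠ 0 →
      (α + b₀ * t + c₀ * t ^ 2) * (b₂ + c₂ * t) = t * (b₁ + c₁ * t) ^ 2 ∧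
      (b₁ + c₁ * t) * (b₃ + c₃ * t + δ * t ^ 2) = (b₂ + c₂ * t) ^ 2 := by
    intro t ht
    have := hq 1 t
    rw [hK] at this
    simp [tcPhi, Matrix.mulVec, dotProduct, Fin.sum_univ_four] at this
    constructor
    · apply mul_left_cancel₀ ht
      linear_combination this.1
    · apply mul_left_cancel₀ (pow_ne_zero 2 ht)
      linear_combination this.2
  obtain ⟨e0, e1, e2, e3⟩ := cubic_coeff_eq_zero (p := α * b₂) (q := α * c₂ + b₀ * b₂ - b₁ ^ 2)
    (r := b₀ * c₂ + c₀ * b₂ - 2 * b₁ * c₁) (w := c₀ * c₂ - c₁ ^ 2)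
    (fun t ht => by linear_combination (key t ht).1)
  obtain ⟨g0, g1, g2, g3⟩ := cubic_coeff_eq_zero (p := b₁ * b₃ - b₂ ^ 2)
    (q := b₁ * c₃ + c₁ * b₃ - 2 * b₂ * c₂) (r := b₁ * δ + c₁ * c₃ - c₂ ^ 2) (w := c₁ * δ)
    (fun t ht => by linear_combination (key t ht).2)
  have hα : α ≠ 0 := by rintro rfl; simp at hdet
  have hδ : δ ≠ 0 := by rintro rfl; simp at hdet
  obtain rfl : b₂ = 0 := by simpa [hα] using e0
  obtain rfl : c₁ = 0 := by simpa [hδ] using g3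
  have hb₁ : b₁ ≠ 0 := by rintro rfl; simp at hdet
  have hc₂ : c₂ ≠ 0 := by rintro rfl; simp at hdet
  obtain rfl : b₀ = 0 := by simpa [hc₂] using e2
  obtain rfl : c₀ = 0 := by simpa [hc₂] using e3
  obtain rfl : b₃ = 0 := by simpa [hb₁] using g0
  obtain rfl : c₃ = 0 := by simpa [hb₁] using g1
  have hc : c₂ = α * (b₁ / α) ^ 2 := by
    field_simp
    linear_combination e1
  have hδ' : δ = α * (b₁ / α) ^ 3 := by
    apply mul_left_cancel₀ hb₁
    have : b₁ * δ = c₂ ^ 2 := by linear_combination g2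
    rw [this, hc]
    field_simp
  refine ⟨α, b₁ / α, hα, div_ne_zero hb₁ hα, ?_⟩
  have hb : b₁ = α * (b₁ / α) := by field_simp
  rw [hK]
  ext i j
  fin_cases i <;> fin_cases j <;> simp [rhoMat]
  · exact hb
  · exact hc
  · exact hδ'

open Matrix in
/-- If the curve of `M₁` is contained in the curve of `M₂`, then `N = M₂⁻¹ M₁` (given by
`M₂ N = M₁`) maps the cone over the standard twisted cubic into itself. -/
lemma exists_of_curve_subset {M₁ M₂ N : Matrix (Fin 4) (Fin 4) ℂ} (h₁ : IsUnit M₁.det)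
    (h₂ : IsUnit M₂.det) (hN : M₂ * N = M₁)
    (hsub : {z : Fin 4 → ℂ | z ≠ 0 ∧ ∃ s t : ℂ, (s, t) ≠ (0, 0) ∧
        ∃ μ : ℂ, μ ≠ 0 ∧ z = μ • M₁.mulVec (tcPhi s t)} ⊆
      {z : Fin 4 → ℂ | z ≠ 0 ∧ ∃ s t : ℂ, (s, t) ≠ (0, 0) ∧
        ∃ μ : ℂ, μ ≠ 0 ∧ z = μ • M₂.mulVec (tcPhi s t)})
    {s t : ℂ} (hst : (s, t) ≠ (0, 0)) :
    ∃ s' t' : ℂ, (s', t') ≠ (0, 0) ∧ ∃ μ : ℂ, μ ≠ 0 ∧ N *ᵥ tcPhi s t = μ • tcPhi s' t' := by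
  have hinj₁ := Matrix.mulVec_injective_of_isUnit ((Matrix.isUnit_iff_isUnit_det _).2 h₁)
  have hinj₂ := Matrix.mulVec_injective_of_isUnit ((Matrix.isUnit_iff_isUnit_det _).2 h₂)
  have hne : M₁ *ᵥ tcPhi s t ≠ 0 := fun h =>
    tcPhi_ne_zero hst (hinj₁ (h.trans (Matrix.mulVec_zero _).symm))
  obtain ⟨-, s', t', h', μ, hμ, e⟩ :=
    hsub ⟨hne, s, t, hst, 1, one_ne_zero, (one_smul _ _).symm⟩
  refine ⟨s', t', h', μ, hμ, hinj₂ ?_⟩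
  simp only [Matrix.mulVec_mulVec, hN, Matrix.mulVec_smul]
  exact e

open Matrix in
/-- A linear map that sends the cone over the standard twisted cubic onto itself is a multiple of
some `ρ(A)` with `A` invertible. -/
lemma eq_smul_rhoMat {N : Matrix (Fin 4) (Fin 4) ℂ} (hN : N.det ≠ 0)
    (hinto : ∀ s t : ℂ, (s, t) ≠ (0, 0) → ∃ s' t' : ℂ, (s', t') ≠ (0, 0) ∧
      ∃ μ : ℂ, μ ≠ 0 ∧ N *ᵥ tcPhi s t = μ • tcPhi s' t')
    (honto : ∀ s' t' : ℂ, (s', t') ≠ (0, 0) → ∃ s t : ℂ, (s, t) ≠ (0, 0) ∧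
      ∃ μ : ℂ, μ ≠ 0 ∧ N *ᵥ tcPhi s t = μ • tcPhi s' t') :
    ∃ a b c d : ℂ, IsUnit (Matrix.det !![a, b; c, d]) ∧
      ∃ μ : ℂ, μ ≠ 0 ∧ N = μ • rhoMat a b c d := by
  obtain ⟨a, c, hac, μ₀, hμ₀, h₀⟩ := honto 1 0 (by simp)
  obtain ⟨b, d, hbd, μ₁, hμ₁, h₁⟩ := honto 0 1 (by simp)
  have hcol₀ : (N * rhoMat a b c d) *ᵥ tcPhi 1 0 = μ₀ • tcPhi 1 0 := by
    rw [← Matrix.mulVec_mulVec, rhoMat_mulVec, ← h₀]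
    simp
  have hcol₁ : (N * rhoMat a b c d) *ᵥ tcPhi 0 1 = μ₁ • tcPhi 0 1 := by
    rw [← Matrix.mulVec_mulVec, rhoMat_mulVec, ← h₁]
    simp
  have hB : a * d - b * c ≠ 0 := by
    intro hB
    -- If `(a,c)` and `(b,d)` were proportional, so would be `e₀` and `e₃`.
    obtain ⟨k, hk, rfl, rfl⟩ : ∃ k : ℂ, k ≠ 0 ∧ b = k * a ∧ d = k * c := by
      by_cases ha : a = 0
      · subst ha
        have hc : c ≠ 0 := by rintro rfl; simp at hac
        have hb : b = 0 := by simpa [hc] using hB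
        subst hb
        have hd : d ≠ 0 := by rintro rfl; simp at hbd
        exact ⟨d / c, div_ne_zero hd hc, by simp, by field_simp⟩
      · have hd : d = b / a * c := by
          field_simp
          linear_combination hB
        refine ⟨b / a, div_ne_zero ?_ ha, by field_simp, hd⟩
        rintro rfl
        simp [hd] at hbd
    have hs : tcPhi (k * a) (k * c) = k ^ 3 • tcPhi a c := by
      ext i
      fin_cases i <;> simp [tcPhi] <;> ring
    rw [hs, Matrix.mulVec_smul, h₀] at h₁
    have := congrFun h₁ 0
    simp [tcPhi, hk, hμ₀] at this
  have hinv := rhoMat_mul_inv hB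
  set K := N * rhoMat a b c d with hKdef
  have hKdet : K.det ≠ 0 := by
    rw [hKdef, Matrix.det_mul]
    refine mul_ne_zero hN fun h => ?_
    have := congrArg Matrix.det hinv
    rw [Matrix.det_mul, h] at this
    simp at this
  have hq : ∀ s t : ℂ, (K *ᵥ tcPhi s t) 0 * (K *ᵥ tcPhi s t) 2 = (K *ᵥ tcPhi s t) 1 ^ 2 ∧
      (K *ᵥ tcPhi s t) 1 * (K *ᵥ tcPhi s t) 3 = (K *ᵥ tcPhi s t) 2 ^ 2 := by
    intro s t
    rw [hKdef, ← Matrix.mulVec_mulVec, rhoMat_mulVec]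
    generalize a * s + b * t = u
    generalize c * s + d * t = v
    by_cases huv : (u, v) = (0, 0)
    · obtain ⟨rfl, rfl⟩ := Prod.mk.inj huv
      have : tcPhi 0 0 = 0 := by
        ext i
        fin_cases i <;> simp [tcPhi]
      simp [this]
    · obtain ⟨s', t', -, μ, -, e⟩ := hinto u v huv
      rw [e]
      simp only [tcPhi, Pi.smul_apply, smul_eq_mul, Matrix.cons_val]
      constructor <;> ring
  have hshape : K = !![K 0 0, K 0 1, K 0 2, 0; 0, K 1 1, K 1 2, 0; 0, K 2 1, K 2 2, 0;
      0, K 3 1, K 3 2, K 3 3] := by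
    have f := fun i => congrFun hcol₀ i
    have g := fun i => congrFun hcol₁ i
    have f1 := f 1
    have f2 := f 2
    have f3 := f 3
    have g0 := g 0
    have g1 := g 1
    have g2 := g 2
    clear f g
    clear_value K
    simp [tcPhi, Matrix.mulVec, dotProduct, Fin.sum_univ_four] at f1 f2 f3 g0 g1 g2
    ext i j
    fin_cases i <;> fin_cases j <;> simp [f1, f2, f3, g0, g1, g2]
  obtain ⟨α, e, hα, he, hK⟩ := eq_smul_rhoMat_diag K hshape hKdet hq
  have hNe : N = α • (rhoMat 1 0 0 e * rhoMat (d / (a * d - b * c)) (-b / (a * d - b * c))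
      (-c / (a * d - b * c)) (a / (a * d - b * c))) := by
    rw [← Matrix.smul_mul, ← hK, hKdef, Matrix.mul_assoc, hinv, Matrix.mul_one]
  rw [rhoMat_mul] at hNe
  refine ⟨_, _, _, _, ?_, α, hα, hNe⟩
  rw [isUnit_iff_ne_zero, Matrix.det_fin_two_of]
  have : e / (a * d - b * c) ≠ 0 := div_ne_zero he hB
  convert this using 1
  generalize hD : a * d - b * c = D at hB ⊢
  field_simp
  linear_combination e * hD

open Matrix in
/-- Replacing `M` by `μ M ρ(A)` does not enlarge the curve. -/
lemma curve_subset {M M' : Matrix (Fin 4) (Fin 4) ℂ} {a b c d μ : ℂ} (hA : a * d - b * c ≠ 0)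
    (hμ : μ ≠ 0) (h : M' = μ • (M * rhoMat a b c d)) :
    {z : Fin 4 → ℂ | z ≠ 0 ∧ ∃ s t : ℂ, (s, t) ≠ (0, 0) ∧
        ∃ μ : ℂ, μ ≠ 0 ∧ z = μ • M'.mulVec (tcPhi s t)} ⊆
      {z : Fin 4 → ℂ | z ≠ 0 ∧ ∃ s t : ℂ, (s, t) ≠ (0, 0) ∧
        ∃ μ : ℂ, μ ≠ 0 ∧ z = μ • M.mulVec (tcPhi s t)} := by
  rintro z ⟨hz, s, t, hst, ν, hν, rfl⟩
  refine ⟨hz, a * s + b * t, c * s + d * t, ?_, ν * μ, mul_ne_zero hν hμ, ?_⟩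
  · intro h0
    obtain ⟨h1, h2⟩ := Prod.mk.inj h0
    apply hst
    have hs : (a * d - b * c) * s = 0 := by linear_combination d * h1 - b * h2
    have ht : (a * d - b * c) * t = 0 := by linear_combination a * h2 - c * h1
    simp only [mul_eq_zero, hA, false_or] at hs ht
    rw [hs, ht]
  · rw [h, Matrix.smul_mulVec, ← Matrix.mulVec_mulVec, rhoMat_mulVec, smul_smul]

/-- Two invertible matrices `M, M'` define the same twisted cubic (as a subset of ℙ³,
described via nonzero representatives in ℂ⁴) iff `M' = μ·M·ρ(A)` for some `A ∈ GL₂(ℂ)`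
and a nonzero scalar `μ`. -/
theorem stmt3 (M M' : Matrix (Fin 4) (Fin 4) ℂ) (hM : IsUnit M.det) (hM' : IsUnit M'.det) :
    ({z : Fin 4 → ℂ | z ≠ 0 ∧ ∃ s t : ℂ, (s, t) ≠ (0, 0) ∧
        ∃ μ : ℂ, μ ≠ 0 ∧ z = μ • M.mulVec (tcPhi s t)} =
     {z : Fin 4 → ℂ | z ≠ 0 ∧ ∃ s t : ℂ, (s, t) ≠ (0, 0) ∧
        ∃ μ : ℂ, μ ≠ 0 ∧ z = μ • M'.mulVec (tcPhi s t)}) ↔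
    (∃ a b c d : ℂ, IsUnit (Matrix.det !![a, b; c, d]) ∧
        ∃ μ : ℂ, μ ≠ 0 ∧ M' = μ • (M * rhoMat a b c d)) := by
  constructor
  · intro h
    have hN : M * (M⁻¹ * M') = M' := Matrix.mul_nonsing_inv_cancel_left _ _ hM
    have hN' : M' * (M'⁻¹ * M) = M := Matrix.mul_nonsing_inv_cancel_left _ _ hM'
    have hdet : (M⁻¹ * M').det ≠ 0 := by
      intro h0
      rw [← hN, Matrix.det_mul, h0, mul_zero] at hM'
      exact not_isUnit_zero hM'
    obtain ⟨a, b, c, d, hA, μ, hμ, e⟩ := eq_smul_rhoMat hdet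
      (fun s t hst => exists_of_curve_subset hM' hM hN h.ge hst)
      (fun s' t' hst => by
        obtain ⟨s, t, hne, μ, hμ, e⟩ := exists_of_curve_subset hM hM' hN' h.le hst
        refine ⟨s, t, hne, μ⁻¹, inv_ne_zero hμ, ?_⟩
        have hprod : (M⁻¹ * M') * (M'⁻¹ * M) = 1 := by
          rw [Matrix.mul_assoc, hN', Matrix.nonsing_inv_mul _ hM]
        have e' := congrArg (Matrix.mulVec (M⁻¹ * M')) e
        rw [Matrix.mulVec_mulVec, hprod, Matrix.one_mulVec, Matrix.mulVec_smul] at e'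
        rw [e', inv_smul_smul₀ hμ])
    refine ⟨a, b, c, d, hA, μ, hμ, ?_⟩
    rw [← Matrix.mul_smul, ← e, hN]
  · rintro ⟨a, b, c, d, hA, μ, hμ, e⟩
    rw [isUnit_iff_ne_zero, Matrix.det_fin_two_of] at hA
    refine Set.Subset.antisymm ?_ (curve_subset hA hμ e)
    -- The reverse inclusion is the same statement for `M = μ⁻¹ M' ρ(A⁻¹)`.
    refine curve_subset (a := d / (a * d - b * c)) (b := -b / (a * d - b * c))
      (c := -c / (a * d - b * c)) (d := a / (a * d - b * c)) (μ := μ⁻¹) ?_ (inv_ne_zero hμ) ?_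
    · have : 1 / (a * d - b * c) ≠ 0 := div_ne_zero one_ne_zero hA
      convert this using 1
      generalize hD : a * d - b * c = D at hA ⊢
      field_simp
      linear_combination hD
    · rw [e, Matrix.smul_mul, Matrix.mul_assoc, rhoMat_mul_inv hA, Matrix.mul_one,
        inv_smul_smul₀ hμ]
end

section
/- Let X, Y ∈ ℂ⁴ be linearly independent and let p = pl(X,Y) = (p₀,…,p₅) be the Plücker vector of the line they span. Then there exists (s,t) ≠ (0,0) and scalars μ₁, μ₂ ∈ ℂ with φ(s,t) = μ₁X + μ₂Y (i.e. the line through X and Y meets the standard twisted cubic) if and only if −p₃³ − p₃²p₂ + 2p₄p₃p₁ − p₅p₁² − p₄²p₀ + p₅p₃p₀ + p₅p₂p₀ = 0. (This cubic polynomial is the Chow form of the standard twisted cubic.) -/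
/-!
A point `z` lies on the line spanned by independent `X, Y` iff `z ∧ X ∧ Y = 0`, that is, iff the
four expressions `z i * p_{jk} - z j * p_{ik} + z k * p_{ij}` vanish (`mem_span_pair_of_wedge`).

If the line meets the curve at `φ(s,t) = μ₁X + μ₂Y` with, say, `μ₁ ≠ 0`, then
`pl(φ(s,t), Y) = μ₁ pl(X,Y)`, and the cubic `F` vanishes identically on `pl(φ(s,t), Y)`.

Conversely, for `z = φ(s,t)` the triples `123` and `234` give the two binary quadrics
`q₁ = p₃s² - p₁st + p₀t²` and `q₂ = p₅s² - p₄st + p₃t²`, whose resultant is `-p₃F` modulo the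
Plücker relation. When `p₃ ≠ 0`, `F = 0` therefore yields a common zero, at which the other two
wedge equations follow from the Plücker relation. When `p₃ = 0`, the line passes through
`φ(1,0)`, through `φ(0,1)`, or through `φ(p₀,p₁)`.
-/

/-- The Plücker vector `pl(X,Y) = ([12],[13],[14],[23],[24],[34])` of the line spanned by
`X, Y ∈ ℂ⁴`, where `[ij] = X_{i−1}Y_{j−1} − X_{j−1}Y_{i−1}`. -/
noncomputable def pluecker (X Y : Fin 4 → ℂ) : Fin 6 → ℂ :=
  ![X 0 * Y 1 - X 1 * Y 0, X 0 * Y 2 - X 2 * Y 0, X 0 * Y 3 - X 3 * Y 0,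
    X 1 * Y 2 - X 2 * Y 1, X 1 * Y 3 - X 3 * Y 1, X 2 * Y 3 - X 3 * Y 2]

/-- If `z ∧ X ∧ Y = 0` and `X, Y` are linearly independent, then `z` lies in their span; the
coefficients are given by Cramer's rule on a nonvanishing `2 × 2` minor. -/
lemma mem_span_pair_of_wedge {ι : Type*} (X Y z : ι → ℂ) (hXY : LinearIndependent ℂ ![X, Y])
    (h : ∀ i j k, z i * (X j * Y k - X k * Y j) - z j * (X i * Y k - X k * Y i)
      + z k * (X i * Y j - X j * Y i) = 0) :
    ∃ μ₁ μ₂ : ℂ, z = μ₁ • X + μ₂ • Y := by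
  obtain ⟨i, j, hij⟩ : ∃ i j, X i * Y j - X j * Y i ≠ 0 := by
    by_contra! hD
    rw [LinearIndependent.pair_iff] at hXY
    have hX : ∀ i, X i = 0 := fun i => by
      have := (hXY (Y i) (-X i) (by
        ext j
        simp only [Pi.add_apply, Pi.smul_apply, smul_eq_mul, Pi.zero_apply]
        linear_combination -hD i j)).2
      simpa using this
    have := (hXY 1 0 (by ext j; simp [hX j])).1
    exact one_ne_zero this
  refine ⟨(z i * Y j - z j * Y i) / (X i * Y j - X j * Y i),
    (X i * z j - X j * z i) / (X i * Y j - X j * Y i), ?_⟩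
  ext k
  simp only [Pi.add_apply, Pi.smul_apply, smul_eq_mul]
  apply mul_left_cancel₀ hij
  have e : ∀ a b d : ℂ, d ≠ 0 → d * (a / d * X k + b / d * Y k) = a * X k + b * Y k := by
    intro a b d hd
    field_simp
  rw [e _ _ _ hij]
  linear_combination h i j k

/-- Two binary quadrics over `ℂ`, the first with nonzero `s²`-coefficient, whose resultant
vanishes have a common nontrivial zero. The resultant is written in terms of the cross product of
the coefficient vectors, which is proportional to `(s², st, t²)` at a common zero. -/
lemma exists_common_zero (a b c d e f : ℂ) (ha : a ≠ 0)
    (hR : (b * f - c * e) * (a * e - b * d) = (c * d - a * f) ^ 2) :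
    ∃ s t : ℂ, (s, t) ≠ (0, 0) ∧ a * s ^ 2 + b * s * t + c * t ^ 2 = 0 ∧
      d * s ^ 2 + e * s * t + f * t ^ 2 = 0 := by
  by_cases hA : b * f - c * e = 0
  · by_cases hC : a * e - b * d = 0
    · -- The quadrics are proportional, so any zero of the first one works.
      have hB : c * d - a * f = 0 := by
        rw [hA, zero_mul] at hR
        exact pow_eq_zero_iff (two_ne_zero) |>.1 hR.symm
      obtain ⟨r, hr⟩ := IsAlgClosed.exists_pow_nat_eq (discrim a b c) (n := 2) (by norm_num)
      obtain ⟨s, hs⟩ := exists_quadratic_eq_zero ha ⟨r, by rw [← hr]; ring⟩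
      refine ⟨s, 1, by simp, by linear_combination hs, ?_⟩
      apply mul_left_cancel₀ ha
      linear_combination d * hs + s * hC - hB
    · refine ⟨c * d - a * f, a * e - b * d, by simp [hC], ?_, ?_⟩
      · linear_combination -a * hR
      · linear_combination -d * hR
  · refine ⟨b * f - c * e, c * d - a * f, by simp [hA], ?_, ?_⟩
    · linear_combination -c * hR
    · linear_combination -f * hR

/-- If the Chow form vanishes at a point `p` of the Plücker quadric, then the four equations
`φ(s,t) ∧ p = 0` have a nontrivial solution. -/
lemma exists_wedge_eq_zero (p₀ p₁ p₂ p₃ p₄ p₅ : ℂ) (hP : p₀ * p₅ - p₁ * p₄ + p₂ * p₃ = 0)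
    (hF : -p₃ ^ 3 - p₃ ^ 2 * p₂ + 2 * p₄ * p₃ * p₁ - p₅ * p₁ ^ 2 - p₄ ^ 2 * p₀
      + p₅ * p₃ * p₀ + p₅ * p₂ * p₀ = 0) :
    ∃ s t : ℂ, (s, t) ≠ (0, 0) ∧
      s ^ 3 * p₃ - s ^ 2 * t * p₁ + s * t ^ 2 * p₀ = 0 ∧
      s ^ 3 * p₄ - s ^ 2 * t * p₂ + t ^ 3 * p₀ = 0 ∧
      s ^ 3 * p₅ - s * t ^ 2 * p₂ + t ^ 3 * p₁ = 0 ∧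
      s ^ 2 * t * p₅ - s * t ^ 2 * p₄ + t ^ 3 * p₃ = 0 := by
  by_cases h3 : p₃ = 0
  · subst h3
    by_cases h01 : p₀ = 0 ∧ p₁ = 0
    · obtain ⟨rfl, rfl⟩ := h01
      exact ⟨0, 1, by simp, by simp⟩
    by_cases h45 : p₄ = 0 ∧ p₅ = 0
    · obtain ⟨rfl, rfl⟩ := h45
      exact ⟨1, 0, by simp, by simp⟩
    -- The Plücker relation makes `(p₀, p₁)` and `(p₄, p₅)` proportional; both being nonzero,
    -- `p₀ = 0` would force `p₄ = 0` and then `F = -p₅p₁² ≠ 0`.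
    have h0 : p₀ ≠ 0 := by
      rintro rfl
      have h1 : p₁ ≠ 0 := fun h => h01 ⟨rfl, h⟩
      have h4 : p₄ = 0 := by
        apply mul_left_cancel₀ h1
        linear_combination -hP
      have h5 : p₅ = 0 := by
        apply mul_left_cancel₀ (pow_ne_zero 2 h1)
        linear_combination -hF
      exact h45 ⟨h4, h5⟩
    have h4 : p₄ ≠ 0 := by
      rintro rfl
      refine h45 ⟨rfl, ?_⟩
      apply mul_left_cancel₀ h0
      linear_combination hP
    have hG : p₀ ^ 2 * p₄ - p₀ * p₁ * p₂ + p₁ ^ 3 = 0 := by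
      apply mul_left_cancel₀ h4
      linear_combination -p₀ * hF + (p₀ * p₂ - p₁ ^ 2) * hP
    refine ⟨p₀, p₁, by simp [h0], by ring, ?_, ?_, ?_⟩
    · linear_combination p₀ * hG
    · linear_combination p₁ * hG + p₀ ^ 2 * hP
    · linear_combination p₀ * p₁ * hP
  · obtain ⟨s, t, hst, h₁, h₂⟩ := exists_common_zero p₃ (-p₁) p₀ p₅ (-p₄) p₃ h3 (by
      linear_combination p₃ * hF - (p₀ * p₅ - p₃ ^ 2) * hP)
    refine ⟨s, t, hst, by linear_combination s * h₁, ?_, ?_, by linear_combination t * h₂⟩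
    · apply mul_left_cancel₀ h3
      linear_combination s * p₄ * h₁ + t * p₀ * h₂ - s ^ 2 * t * hP
    · apply mul_left_cancel₀ h3
      linear_combination s * p₅ * h₁ + t * p₁ * h₂ - s * t ^ 2 * hP

/-- The Chow form vanishes identically on lines through a point of the twisted cubic: it is zero
at the Plücker vector of `φ(s,t)` and any `Y`. -/
lemma chow_tcPhi (Y : Fin 4 → ℂ) (s t : ℂ) :
    -(s ^ 2 * t * Y 2 - s * t ^ 2 * Y 1) ^ 3
      - (s ^ 2 * t * Y 2 - s * t ^ 2 * Y 1) ^ 2 * (s ^ 3 * Y 3 - t ^ 3 * Y 0)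
      + 2 * (s ^ 2 * t * Y 3 - t ^ 3 * Y 1) * (s ^ 2 * t * Y 2 - s * t ^ 2 * Y 1)
        * (s ^ 3 * Y 2 - s * t ^ 2 * Y 0)
      - (s * t ^ 2 * Y 3 - t ^ 3 * Y 2) * (s ^ 3 * Y 2 - s * t ^ 2 * Y 0) ^ 2
      - (s ^ 2 * t * Y 3 - t ^ 3 * Y 1) ^ 2 * (s ^ 3 * Y 1 - s ^ 2 * t * Y 0)
      + (s * t ^ 2 * Y 3 - t ^ 3 * Y 2) * (s ^ 2 * t * Y 2 - s * t ^ 2 * Y 1)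
        * (s ^ 3 * Y 1 - s ^ 2 * t * Y 0)
      + (s * t ^ 2 * Y 3 - t ^ 3 * Y 2) * (s ^ 3 * Y 3 - t ^ 3 * Y 0)
        * (s ^ 3 * Y 1 - s ^ 2 * t * Y 0) = 0 := by
  ring

/-- The line spanned by linearly independent `X, Y ∈ ℂ⁴` meets the standard twisted cubic
iff the Chow form of the twisted cubic vanishes at its Plücker vector `p = pl(X,Y)`:
`−p₃³ − p₃²p₂ + 2p₄p₃p₁ − p₅p₁² − p₄²p₀ + p₅p₃p₀ + p₅p₂p₀ = 0`. -/
theorem stmt6 (X Y : Fin 4 → ℂ) (hXY : LinearIndependent ℂ ![X, Y]) :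
    (∃ s t μ₁ μ₂ : ℂ, (s, t) ≠ (0, 0) ∧ tcPhi s t = μ₁ • X + μ₂ • Y) ↔
    -(pluecker X Y 3) ^ 3 - (pluecker X Y 3) ^ 2 * pluecker X Y 2
      + 2 * pluecker X Y 4 * pluecker X Y 3 * pluecker X Y 1
      - pluecker X Y 5 * (pluecker X Y 1) ^ 2 - (pluecker X Y 4) ^ 2 * pluecker X Y 0
      + pluecker X Y 5 * pluecker X Y 3 * pluecker X Y 0
      + pluecker X Y 5 * pluecker X Y 2 * pluecker X Y 0 = 0 := by
  constructor
  · rintro ⟨s, t, μ₁, μ₂, hst, hz⟩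
    have z0 : s ^ 3 = μ₁ * X 0 + μ₂ * Y 0 := by simpa [tcPhi] using congrFun hz 0
    have z1 : s ^ 2 * t = μ₁ * X 1 + μ₂ * Y 1 := by simpa [tcPhi] using congrFun hz 1
    have z2 : s * t ^ 2 = μ₁ * X 2 + μ₂ * Y 2 := by simpa [tcPhi] using congrFun hz 2
    have z3 : t ^ 3 = μ₁ * X 3 + μ₂ * Y 3 := by simpa [tcPhi] using congrFun hz 3
    by_cases h1 : μ₁ = 0
    · have h2 : μ₂ ≠ 0 := by
        rintro rfl
        apply hst
        simp only [h1, zero_mul, add_zero] at z0 z3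
        simp [pow_eq_zero_iff (three_ne_zero) |>.1 z0, pow_eq_zero_iff (three_ne_zero) |>.1 z3]
      apply mul_left_cancel₀ (pow_ne_zero 3 h2)
      have e := chow_tcPhi X s t
      have hp : ∀ i j (a b : ℂ), a = μ₁ * X i + μ₂ * Y i → b = μ₁ * X j + μ₂ * Y j →
          a * X j - b * X i = -(μ₂ * (X i * Y j - X j * Y i)) := by
        rintro i j _ _ rfl rfl
        ring
      rw [hp 0 1 _ _ z0 z1, hp 0 2 _ _ z0 z2, hp 0 3 _ _ z0 z3, hp 1 2 _ _ z1 z2,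
        hp 1 3 _ _ z1 z3, hp 2 3 _ _ z2 z3] at e
      simp only [pluecker, Matrix.cons_val]
      linear_combination -e
    · apply mul_left_cancel₀ (pow_ne_zero 3 h1)
      have e := chow_tcPhi Y s t
      have hp : ∀ i j (a b : ℂ), a = μ₁ * X i + μ₂ * Y i → b = μ₁ * X j + μ₂ * Y j →
          a * Y j - b * Y i = μ₁ * (X i * Y j - X j * Y i) := by
        rintro i j _ _ rfl rfl
        ring
      rw [hp 0 1 _ _ z0 z1, hp 0 2 _ _ z0 z2, hp 0 3 _ _ z0 z3, hp 1 2 _ _ z1 z2,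
        hp 1 3 _ _ z1 z3, hp 2 3 _ _ z2 z3] at e
      simp only [pluecker, Matrix.cons_val]
      linear_combination e
  · intro hF
    obtain ⟨s, t, hst, h₁, h₂, h₃, h₄⟩ := exists_wedge_eq_zero _ _ _ _ _ _
      (by simp only [pluecker, Matrix.cons_val]; ring) hF
    simp only [pluecker, Matrix.cons_val] at h₁ h₂ h₃ h₄
    obtain ⟨μ₁, μ₂, h⟩ := mem_span_pair_of_wedge X Y (tcPhi s t) hXY (by
      intro i j k
      fin_cases i <;> fin_cases j <;> fin_cases k <;>
        simp only [tcPhi, Fin.mk_zero, Fin.mk_one, Fin.reduceFinMk, Fin.isValue,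
          Matrix.cons_val] <;> grind)
    exact ⟨s, t, μ₁, μ₂, hst, h⟩
end

section
/- Let C be a complex 3×4 matrix of rank 3, let c ∈ ℂ⁴ be nonzero with Cc = 0, and let C† be any 4×3 matrix with C·C† = I₃ (a right pseudo-inverse). Then E(c)·C†·C = E(c). Equivalently, writing Ĉ = E(c)C†, one has Ĉ·C = E(c), so the matrix ĈC depends only on the center c of the camera C and not on C itself. -/
/-!
The matrix `C† C - 1` maps into `ker C`, because `C (C† C - 1) = (C C†) C - C = 0`. By rank–nullity
`ker C` is a line, hence spanned by the center `c`, and `E(c)` kills `c` (each row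
gives `c j * c i - c i * c j = 0`). Thus `E(c) (C† C - 1) = 0`.
-/

/-- The 6×4 matrix `E(c)`. -/
noncomputable def Emat (c : Fin 4 → ℂ) : Matrix (Fin 6) (Fin 4) ℂ :=
  !![c 1, -c 0, 0, 0;
     c 2, 0, -c 0, 0;
     c 3, 0, 0, -c 0;
     0, c 2, -c 1, 0;
     0, c 3, 0, -c 1;
     0, 0, c 3, -c 2]

theorem Emat_mulVec_self (c : Fin 4 → ℂ) : (Emat c).mulVec c = 0 := by
  ext i
  fin_cases i <;> simp [Emat, Matrix.mulVec, dotProduct, Fin.sum_univ_four] <;> ring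

theorem exists_smul_center_of_mulVec_eq_zero (C : Matrix (Fin 3) (Fin 4) ℂ) (hrank : C.rank = 3)
    (c : Fin 4 → ℂ) (hc : c ≠ 0) (hCc : C.mulVec c = 0) (w : Fin 4 → ℂ) (hw : C.mulVec w = 0) :
    ∃ t : ℂ, t • c = w := by
  have hker : Module.finrank ℂ (LinearMap.ker C.mulVecLin) = 1 := by
    have h := LinearMap.finrank_range_add_finrank_ker C.mulVecLin
    rw [Module.finrank_fin_fun] at h
    change C.rank + _ = 4 at h
    omega
  have hc' : (⟨c, hCc⟩ : LinearMap.ker C.mulVecLin) ≠ 0 := fun h => hc (congrArg Subtype.val h)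
  obtain ⟨t, ht⟩ := (finrank_eq_one_iff_of_nonzero' _ hc').mp hker ⟨w, hw⟩
  exact ⟨t, congrArg Subtype.val ht⟩

/-- For a camera `C` of rank 3 with center `c` and any right pseudo-inverse `C†`
(`C·C† = I₃`), one has `E(c)·C†·C = E(c)`; i.e. `ĈC = E(c)` depends only on the center. -/
theorem stmt10 (C : Matrix (Fin 3) (Fin 4) ℂ) (hrank : C.rank = 3)
    (c : Fin 4 → ℂ) (hc : c ≠ 0) (hCc : C.mulVec c = 0)
    (Cd : Matrix (Fin 4) (Fin 3) ℂ) (hCd : C * Cd = 1) :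
    Emat c * Cd * C = Emat c := by
  have hzero : C * (Cd * C - 1) = 0 := by
    rw [Matrix.mul_sub, ← Matrix.mul_assoc, hCd, Matrix.one_mul, Matrix.mul_one, sub_self]
  have hE : Emat c * (Cd * C - 1) = 0 := by
    refine Matrix.ext_of_mulVec_single fun j => ?_
    rw [← Matrix.mulVec_mulVec, Matrix.zero_mulVec]
    obtain ⟨t, ht⟩ := exists_smul_center_of_mulVec_eq_zero C hrank c hc hCc
      ((Cd * C - 1).mulVec (Pi.single j 1))
      (by rw [Matrix.mulVec_mulVec, hzero, Matrix.zero_mulVec])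
    rw [← ht, Matrix.mulVec_smul, Emat_mulVec_self, smul_zero]
  rw [Matrix.mul_sub, Matrix.mul_one, sub_eq_zero] at hE
  rw [Matrix.mul_assoc, hE]
end

section
/- Let C be a complex 3×4 matrix of rank 3, let c ∈ ℂ⁴ be nonzero with Cc = 0, and let C† be a 4×3 matrix with C·C† = I₃. Let h = (h₀,h₁,h₂,h₃) ∈ ℂ⁴ satisfy h₀ ≠ 0 and hᵀc ≠ 0. Then there exists λ ∈ ℂ ∖ {0} such that C·H(h)·Ĥ(h)·E(c)·C† = λ·I₃; that is, up to a nonzero scalar, Ĥ(h)·E(c)·C† is a two-sided inverse of the invertible 3×3 matrix C·H(h). -/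
/-!
The product `H(h)·Ĥ(h)·E(c)` equals `h₀ • (c hᵀ - (hᵀc) I₄)`: a rank-one matrix with column space
spanned by the center `c`, plus a multiple of the identity. Multiplying by `C` on the left kills
the rank-one part because `C c = 0`, and `C·C† = I₃` then gives the scalar `-h₀ (hᵀc)`.
-/

open Matrix

/-- The 4×3 matrix `H(h)`. -/
noncomputable def Hmat (h : Fin 4 → ℂ) : Matrix (Fin 4) (Fin 3) ℂ :=
  !![-h 1, -h 2, -h 3;
     h 0, 0, 0;
     0, h 0, 0;
     0, 0, h 0]

/-- The 3×6 matrix `Ĥ(h)`. -/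
noncomputable def Hhat (h : Fin 4 → ℂ) : Matrix (Fin 3) (Fin 6) ℂ :=
  !![h 0, 0, 0, -h 2, -h 3, 0;
     0, h 0, 0, h 1, 0, -h 3;
     0, 0, h 0, 0, h 1, h 2]

/-- Up to the factor `h₀`, the product `H(h)·Ĥ(h)·E(c)` is `c hᵀ - (hᵀc) I₄`. -/
theorem Hmat_mul_Hhat_mul_Emat (h c : Fin 4 → ℂ) :
    Hmat h * (Hhat h * Emat c) =
      h 0 • (vecMulVec c h - (h ⬝ᵥ c) • (1 : Matrix (Fin 4) (Fin 4) ℂ)) := by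
  ext i j
  fin_cases i <;> fin_cases j <;>
    simp [Hmat, Hhat, Emat, Matrix.mul_apply, vecMulVec_apply, dotProduct, Fin.sum_univ_succ,
      -mul_eq_mul_left_iff] <;>
    ring

/-- For a camera `C` of rank 3 with center `c`, right pseudo-inverse `C†`, and a plane `h`
with `h₀ ≠ 0` and `hᵀc ≠ 0`, one has `C·H(h)·Ĥ(h)·E(c)·C† = λ·I₃` for some `λ ≠ 0`:
up to a nonzero scalar, `Ĥ(h)·E(c)·C†` is a two-sided inverse of `C·H(h)`. -/
theorem stmt11 (C : Matrix (Fin 3) (Fin 4) ℂ) (hrank : C.rank = 3)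
    (c : Fin 4 → ℂ) (hc : c ≠ 0) (hCc : C.mulVec c = 0)
    (Cd : Matrix (Fin 4) (Fin 3) ℂ) (hCd : C * Cd = 1)
    (h : Fin 4 → ℂ) (hh0 : h 0 ≠ 0) (hhc : h ⬝ᵥ c ≠ 0) :
    ∃ lam : ℂ, lam ≠ 0 ∧
      C * Hmat h * (Hhat h * Emat c * Cd) = lam • (1 : Matrix (Fin 3) (Fin 3) ℂ) := by
  refine ⟨-(h 0 * (h ⬝ᵥ c)), neg_ne_zero.mpr (mul_ne_zero hh0 hhc), ?_⟩
  calc C * Hmat h * (Hhat h * Emat c * Cd)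
      = C * (Hmat h * (Hhat h * Emat c)) * Cd := by simp only [Matrix.mul_assoc]
    _ = -(h 0 * (h ⬝ᵥ c)) • (1 : Matrix (Fin 3) (Fin 3) ℂ) := by
      rw [Hmat_mul_Hhat_mul_Emat, Matrix.mul_smul, Matrix.mul_sub, mul_vecMulVec, hCc,
        zero_vecMulVec, zero_sub, Matrix.mul_smul, Matrix.mul_one, smul_neg, smul_smul,
        Matrix.neg_mul, Matrix.smul_mul, hCd, neg_smul]
end

section
/- Let F be a complex 3×3 matrix of rank 2 (a fundamental matrix). Let e₂¹ ∈ ℂ³ ∖ {0} with F·e₂¹ = 0 and e₁² ∈ ℂ³ ∖ {0} with Fᵀ·e₁² = 0, and assume (e₂¹)₀ ≠ 0 and (e₁²)ᵀe₁² ≠ 0. Define the cameras C₁ = [0 | v₂ | v₃ | e₁²], where v₂ and v₃ are the second and third columns of the 3×3 matrix [e₁²]_× F, and C₂ = [[(e₂¹)₀, 0, 0, 0], [(e₂¹)₁, 1, 0, 0], [(e₂¹)₂, 0, 1, 0]]. Then there exists λ ∈ ℂ ∖ {0} such that for all y₁, y₂ ∈ ℂ³, det [[C₁, y₁, 0], [C₂,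 0, y₂]] = λ · y₁ᵀ F y₂, where [[C₁, y₁, 0], [C₂, 0, y₂]] is the 6×6 matrix whose first three rows are the rows of C₁ followed by the entries of y₁ and a zero, and whose last three rows are the rows of C₂ followed by a zero and the entries of y₂. In particular (C₁, C₂) is a camera pair whose fundamental matrix is F, with the first column of C₁ and the last column of C₂ equal to zero. -/
/-!
Write `e = e₁²`, `a = e₂¹`, and let `g₀, g₁, g₂` be the columns of `[e]ₓF`. Expanding the `6 × 6`
determinant along the second camera leaves the triple product
`det [z₁ g₁ + z₂ g₂ | e | y₁]`, with `zⱼ = a₀ (y₂)ⱼ - (y₂)₀ aⱼ` (`det_camera_pair`).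
Since `F a = 0`, also `a₀ g₀ + a₁ g₁ + a₂ g₂ = 0`, so
`z₁ g₁ + z₂ g₂ = a₀ [e]ₓ F y₂ = a₀ (e × w)` with `w = F y₂`. Finally
`det [e × w | e | y₁] = (e ⬝ e) (y₁ ⬝ w) - (e ⬝ w) (y₁ ⬝ e)`, and `e ⬝ w = 0` because `Fᵀ e = 0`.
Hence the scalar is `a₀ (e ⬝ e)`, which is nonzero.
-/

open Matrix

/-- The cross-product matrix `[e]ₓ` of `e ∈ ℂ³`. -/
noncomputable def crossMat (e : Fin 3 → ℂ) : Matrix (Fin 3) (Fin 3) ℂ :=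
  !![0, -e 2, e 1;
     e 2, 0, -e 0;
     -e 1, e 0, 0]

/-- The `6 × 6` determinant of a camera pair of the special shape considered here, reduced to a
triple product in `ℂ³`; `g` and `h` are the two middle columns of the first camera. -/
lemma det_camera_pair (g h e a y z : Fin 3 → ℂ) :
    Matrix.det
      !![(0 : ℂ), g 0, h 0, e 0, y 0, 0;
         0, g 1, h 1, e 1, y 1, 0;
         0, g 2, h 2, e 2, y 2, 0;
         a 0, 0, 0, 0, 0, z 0;
         a 1, 1, 0, 0, 0, z 1;
         a 2, 0, 1, 0, 0, z 2]
      = Matrix.det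
        (Matrix.of ![(a 0 * z 1 - z 0 * a 1) • g + (a 0 * z 2 - z 0 * a 2) • h, e, y]) := by
  simp [Matrix.det_succ_row_zero, Fin.sum_univ_succ, Fin.succAbove]
  ring

/-- Given a fundamental matrix `F` with epipoles `e₂¹` (`F e₂¹ = 0`, `(e₂¹)₀ ≠ 0`) and
`e₁²` (`Fᵀ e₁² = 0`, `(e₁²)ᵀe₁² ≠ 0`), the camera pair
`C₁ = [0 | v₂ | v₃ | e₁²]` (with `v₂, v₃` the last two columns of `[e₁²]ₓF`) and
`C₂ = [[(e₂¹)₀,0,0,0],[(e₂¹)₁,1,0,0],[(e₂¹)₂,0,1,0]]` is a solution of `F`: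
`det [[C₁, y₁, 0],[C₂, 0, y₂]] = λ·y₁ᵀFy₂` for some fixed `λ ≠ 0` and all `y₁, y₂`. -/
theorem stmt14 (F : Matrix (Fin 3) (Fin 3) ℂ) (hF : F.rank = 2)
    (e21 e12 : Fin 3 → ℂ) (h21 : e21 ≠ 0) (hFe : F.mulVec e21 = 0)
    (h12 : e12 ≠ 0) (hFt : Fᵀ.mulVec e12 = 0)
    (h0 : e21 0 ≠ 0) (hdot : e12 ⬝ᵥ e12 ≠ 0) :
    ∃ lam : ℂ, lam ≠ 0 ∧ ∀ y₁ y₂ : Fin 3 → ℂ,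
      Matrix.det
        !![(0 : ℂ), (crossMat e12 * F) 0 1, (crossMat e12 * F) 0 2, e12 0, y₁ 0, 0;
           0, (crossMat e12 * F) 1 1, (crossMat e12 * F) 1 2, e12 1, y₁ 1, 0;
           0, (crossMat e12 * F) 2 1, (crossMat e12 * F) 2 2, e12 2, y₁ 2, 0;
           e21 0, 0, 0, 0, 0, y₂ 0;
           e21 1, 1, 0, 0, 0, y₂ 1;
           e21 2, 0, 1, 0, 0, y₂ 2]
        = lam * (y₁ ⬝ᵥ F.mulVec y₂) := by
  refine ⟨e21 0 * (e12 ⬝ᵥ e12), by simpa using ⟨h0, hdot⟩, fun y₁ y₂ => ?_⟩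
  rw [det_camera_pair (fun i => (crossMat e12 * F) i 1) (fun i => (crossMat e12 * F) i 2)
    e12 e21 y₁ y₂]
  have a0 := congrFun hFe 0
  have a1 := congrFun hFe 1
  have a2 := congrFun hFe 2
  have b0 := congrFun hFt 0
  have b1 := congrFun hFt 1
  have b2 := congrFun hFt 2
  simp only [Matrix.mulVec, dotProduct, Fin.sum_univ_three, Matrix.transpose_apply,
    Pi.zero_apply] at a0 a1 a2 b0 b1 b2
  simp only [Matrix.det_fin_three, crossMat, Matrix.mul_apply, Matrix.mulVec, dotProduct,
    Fin.sum_univ_three, Matrix.of_apply, Matrix.cons_val, Pi.add_apply, Pi.smul_apply,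
    smul_eq_mul]
  -- The coefficients of `b0, b1, b2` come from `(y₁ ⬝ e) (e ⬝ F y₂)`, those of `a0, a1, a2` from
  -- replacing `z₁ g₁ + z₂ g₂` by `a₀ [e]ₓ F y₂ - (y₂)₀ [e]ₓ F a`.
  linear_combination
    (-(e21 0 * (y₁ 0 * e12 0 + y₁ 1 * e12 1 + y₁ 2 * e12 2)) *
        (y₂ 0 * b0 + y₂ 1 * b1 + y₂ 2 * b2)
      - y₂ 0 * (e12 0 * e12 0 + e12 1 * e12 1 + e12 2 * e12 2) *
        (y₁ 0 * a0 + y₁ 1 * a1 + y₁ 2 * a2)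
      + y₂ 0 * (y₁ 0 * e12 0 + y₁ 1 * e12 1 + y₁ 2 * e12 2) *
        (e12 0 * a0 + e12 1 * a1 + e12 2 * a2))
end

section
/- Let d ≥ 1, let q be a nonzero homogeneous polynomial of degree d in three variables over ℂ, let X, Y ∈ ℂ⁴ be linearly independent, and let p = pl(X,Y) = (p₀,…,p₅). Then q(p₀, p₁, p₂) = 0 if and only if there exists z = (z₀,z₁,z₂) ∈ ℂ³ ∖ {0} with q(z) = 0 such that the point (0, z₀, z₁, z₂) ∈ ℂ⁴ lies in the span of X and Y; that is, the line spanned by X and Y meets the curve {(0 : z₀ : z₁ : z₂) : q(z) = 0} in the plane {X₀ = 0} exactly when q evaluated at the first three Plücker coordinates of the line vanishes. -/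
theorem eval_smul_of_isHomogeneous {d : ℕ} {q : MvPolynomial (Fin 3) ℂ}
    (hhom : q.IsHomogeneous d) (c : ℂ) (z : Fin 3 → ℂ) :
    MvPolynomial.eval (c • z) q = c ^ d * MvPolynomial.eval z q := by
  rw [MvPolynomial.eval_eq, MvPolynomial.eval_eq, Finset.mul_sum]
  refine Finset.sum_congr rfl fun m hm => ?_
  have hdeg : ∑ i ∈ m.support, m i = d := by
    rw [← hhom.degree_eq_sum_deg_support hm]
  simp only [Pi.smul_apply, smul_eq_mul, mul_pow, Finset.prod_mul_distrib,
    Finset.prod_pow_eq_pow_sum, hdeg]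
  ring

/-- The restriction of `q` to the affine line `t ↦ u + t • v`, as a polynomial in `t`. -/
theorem exists_polynomial_eval_line (q : MvPolynomial (Fin 3) ℂ) (u v : Fin 3 → ℂ) :
    ∃ f : Polynomial ℂ, ∀ t, f.eval t = MvPolynomial.eval (u + t • v) q := by
  refine ⟨MvPolynomial.aeval
    (fun i => Polynomial.C (u i) + Polynomial.C (v i) * Polynomial.X) q, fun t => ?_⟩
  induction q using MvPolynomial.induction_on with
  | C a => simp
  | add p q hp hq => simp [hp, hq]
  | mul_X p i hp => simp [hp, mul_comm t]

/-- A form of positive degree has a nontrivial zero on every two-dimensional subspace. If it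
has none of the shape `u + t • v`, then `t ↦ q (u + t • v)` is a constant `c`, hence
`q (v + s • u) = c * s ^ d` for `s ≠ 0`, so for all `s`, and `s = 0` gives `q v = 0`. -/
theorem exists_zero_on_line {d : ℕ} (hd : 1 ≤ d) {q : MvPolynomial (Fin 3) ℂ}
    (hhom : q.IsHomogeneous d) (u v : Fin 3 → ℂ) :
    MvPolynomial.eval v q = 0 ∨ ∃ t : ℂ, MvPolynomial.eval (u + t • v) q = 0 := by
  obtain ⟨f, hf⟩ := exists_polynomial_eval_line q u v
  obtain ⟨g, hg⟩ := exists_polynomial_eval_line q v u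
  by_cases hdeg : f.degree = 0
  · left
    rw [Polynomial.eq_C_of_degree_eq_zero hdeg] at hf
    have hgc : g = Polynomial.C (f.coeff 0) * Polynomial.X ^ d := by
      refine Polynomial.eq_of_infinite_eval_eq _ _
        ((Set.finite_singleton (0 : ℂ)).infinite_compl.mono fun s hs => ?_)
      have hs0 : s ≠ 0 := hs
      have h : v + s • u = s • (u + s⁻¹ • v) := by
        rw [smul_add, smul_inv_smul₀ hs0, add_comm]
      have hc := hf s⁻¹
      rw [Polynomial.eval_C] at hc
      change g.eval s = _
      rw [hg, h, eval_smul_of_isHomogeneous hhom, ← hc, Polynomial.eval_mul, Polynomial.eval_C,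
        Polynomial.eval_pow, Polynomial.eval_X, mul_comm]
    have h0 := hg 0
    rw [hgc] at h0
    simpa [show d ≠ 0 by omega] using h0.symm
  · right
    obtain ⟨t, ht⟩ := IsAlgClosed.exists_root f hdeg
    exact ⟨t, by rw [← hf]; exact ht⟩

/-- For a nonzero homogeneous `q` of degree `d ≥ 1` in three variables, the line spanned
by linearly independent `X, Y ∈ ℂ⁴` meets the curve `{(0:z₀:z₁:z₂) : q(z) = 0}` in the
plane `{X₀ = 0}` exactly when `q` vanishes at the first three Plücker coordinates. -/
theorem stmt15 (d : ℕ) (hd : 1 ≤ d) (q : MvPolynomial (Fin 3) ℂ) (hq : q ≠ 0)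
    (hhom : q.IsHomogeneous d) (X Y : Fin 4 → ℂ) (hXY : LinearIndependent ℂ ![X, Y]) :
    MvPolynomial.eval ![pluecker X Y 0, pluecker X Y 1, pluecker X Y 2] q = 0 ↔
    ∃ z : Fin 3 → ℂ, z ≠ 0 ∧ MvPolynomial.eval z q = 0 ∧
      (![0, z 0, z 1, z 2] : Fin 4 → ℂ) ∈ Submodule.span ℂ {X, Y} := by
  rw [LinearIndependent.pair_iff] at hXY
  set p : Fin 3 → ℂ := ![pluecker X Y 0, pluecker X Y 1, pluecker X Y 2] with hp
  have hp0 : p 0 = X 0 * Y 1 - X 1 * Y 0 := rfl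
  have hp1 : p 1 = X 0 * Y 2 - X 2 * Y 0 := rfl
  have hp2 : p 2 = X 0 * Y 3 - X 3 * Y 0 := rfl
  by_cases h0 : X 0 = 0 ∧ Y 0 = 0
  · obtain ⟨hX, hY⟩ := h0
    have hpz : p = (0 : ℂ) • p := by
      ext i; fin_cases i <;> simp [hp0, hp1, hp2, hX, hY]
    have hL : MvPolynomial.eval p q = 0 := by
      rw [hpz, eval_smul_of_isHomogeneous hhom, zero_pow (by omega), zero_mul]
    refine iff_of_true hL ?_
    -- Any nonzero combination of `X` and `Y` with `q = 0` at its last three coordinates works.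
    have key : ∀ a b : ℂ, ¬ (a = 0 ∧ b = 0) →
        MvPolynomial.eval (a • ![X 1, X 2, X 3] + b • ![Y 1, Y 2, Y 3]) q = 0 →
        ∃ z : Fin 3 → ℂ, z ≠ 0 ∧ MvPolynomial.eval z q = 0 ∧
          (![0, z 0, z 1, z 2] : Fin 4 → ℂ) ∈ Submodule.span ℂ {X, Y} := by
      intro a b hab hz
      refine ⟨_, fun h => hab (hXY a b ?_), hz, Submodule.mem_span_pair.2 ⟨a, b, ?_⟩⟩
      · have e0 : a * X 1 + b * Y 1 = 0 := congrFun h 0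
        have e1 : a * X 2 + b * Y 2 = 0 := congrFun h 1
        have e2 : a * X 3 + b * Y 3 = 0 := congrFun h 2
        ext i; fin_cases i <;> simp [hX, hY, e0, e1, e2]
      · ext i; fin_cases i <;> simp [hX, hY]
    rcases exists_zero_on_line hd hhom ![X 1, X 2, X 3] ![Y 1, Y 2, Y 3] with h | ⟨t, h⟩
    · exact key 0 1 (by simp) (by simpa using h)
    · exact key 1 t (by simp) (by rwa [one_smul])
  · constructor
    · intro hL
      refine ⟨p, fun h => h0 ?_, hL, Submodule.mem_span_pair.2 ⟨-Y 0, X 0, ?_⟩⟩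
      · have e0 := congrFun h 0
        have e1 := congrFun h 1
        have e2 := congrFun h 2
        rw [hp0, Pi.zero_apply] at e0
        rw [hp1, Pi.zero_apply] at e1
        rw [hp2, Pi.zero_apply] at e2
        have := hXY (-Y 0) (X 0) (by
          ext i
          fin_cases i <;> simp <;> grind)
        exact ⟨this.2, neg_eq_zero.1 this.1⟩
      · ext i; fin_cases i <;> simp [hp0, hp1, hp2] <;> ring
    · rintro ⟨z, hz, hqz, hmem⟩
      obtain ⟨a, b, hab⟩ := Submodule.mem_span_pair.1 hmem
      have e0 : a * X 0 + b * Y 0 = 0 := congrFun hab 0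
      have e1 : a * X 1 + b * Y 1 = z 0 := congrFun hab 1
      have e2 : a * X 2 + b * Y 2 = z 1 := congrFun hab 2
      have e3 : a * X 3 + b * Y 3 = z 2 := congrFun hab 3
      -- The vanishing first coordinate makes `(a, b)` proportional to `(-Y 0, X 0)`.
      obtain ⟨c, ha, hb⟩ : ∃ c : ℂ, a = c * -Y 0 ∧ b = c * X 0 := by
        by_cases hX : X 0 = 0
        · have hY : Y 0 ≠ 0 := fun hY => h0 ⟨hX, hY⟩
          refine ⟨-a / Y 0, by field_simp, ?_⟩
          have : b = 0 := by simpa [hX, hY] using e0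
          simp [this, hX]
        · refine ⟨b / X 0, ?_, by field_simp⟩
          field_simp
          linear_combination e0
      have hzc : z = c • p := by
        ext i
        fin_cases i
        · simp [hp0, ← e1, ha, hb]; ring
        · simp [hp1, ← e2, ha, hb]; ring
        · simp [hp2, ← e3, ha, hb]; ring
      have hc : c ≠ 0 := by
        rintro rfl
        exact hz (by rw [hzc, zero_smul])
      rw [hzc, eval_smul_of_isHomogeneous hhom] at hqz
      exact (mul_eq_zero.1 hqz).resolve_left (pow_ne_zero _ hc)
end

section
/- Let X = (X₀, X₁, X₂, X₃) ∈ ℂ⁴ ∖ {0}. The 2×3 matrix [[X₀, X₁, X₂], [X₁, X₂, X₃]] has rank at most 1 (i.e. X₀X₂ = X₁², X₀X₃ = X₁X₂ and X₁X₃ = X₂²) if and only if there exist (s,t) ∈ ℂ² ∖ {(0,0)} and λ ∈ ℂ ∖ {0} with X = λ·φ(s,t). That is, the standard twisted cubic is exactly the zero locus in ℙ³ of the 2×2 minors of this matrix. -/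
/-- A nonzero `X ∈ ℂ⁴` satisfies the 2×2 minor equations of `[[X₀,X₁,X₂],[X₁,X₂,X₃]]`
iff it represents a point of the standard twisted cubic. -/
theorem stmt18 (X : Fin 4 → ℂ) (hX : X ≠ 0) :
    (X 0 * X 2 = X 1 ^ 2 ∧ X 0 * X 3 = X 1 * X 2 ∧ X 1 * X 3 = X 2 ^ 2) ↔
    ∃ s t lam : ℂ, (s, t) ≠ (0, 0) ∧ lam ≠ 0 ∧ X = lam • tcPhi s t := by
  constructor
  · rintro ⟨h1, h2, h3⟩
    by_cases h0 : X 0 = 0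
    · have hx1 : X 1 = 0 := by simpa [h0] using h1.symm
      have hx2 : X 2 = 0 := by simpa [hx1] using h3.symm
      refine ⟨0, 1, X 3, by simp, ?_, ?_⟩
      · intro hx3
        apply hX
        funext i
        fin_cases i <;> simp [h0, hx1, hx2, hx3]
      · funext i
        fin_cases i <;> simp [tcPhi, h0, hx1, hx2]
    · have hx2 : X 2 = X 1 ^ 2 / X 0 := by
        rw [eq_div_iff h0, ← h1, mul_comm]
      have hx3 : X 3 = X 1 * X 2 / X 0 := by
        rw [eq_div_iff h0, ← h2, mul_comm]
      refine ⟨X 0, X 1, (X 0 ^ 2)⁻¹, by simp [h0], by simp [h0], ?_⟩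
      funext i
      fin_cases i <;> simp [tcPhi, hx3, hx2] <;> field_simp
  · rintro ⟨s, t, l, -, -, rfl⟩
    simp only [tcPhi, Pi.smul_apply, smul_eq_mul, Matrix.cons_val]
    refine ⟨?_, ?_, ?_⟩ <;> ring
end
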